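/- Let k > 1 be an integer and α a complex number. The function n ↦ g_k(n)/n^α is an MO function if and only if k is a prime power, Re α > 0, and ζ(α) = 0, where ζ is the Riemann zeta function. -/

import Mathlib

open Filter Finset

/-- `f` is a multiplicative arithmetical function: `f 1 = 1` and
`f (m*n) = f m * f n` whenever `gcd m n = 1`. -/
def IsMultFn (f : ℕ → ℂ) : Prop :=
  f 1 = 1 ∧ ∀ m n : ℕ, Nat.Coprime m n → f (m * n) = f m * f n

/-- The series `∑_{k=0}^∞ g k` converges (in the sense of partial sums) to `L`. -/
def SeriesTendsTo (g : ℕ → ℂ) (L : ℂ) : Prop :=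
  Filter.Tendsto (fun N => ∑ k ∈ Finset.range N, g k) Filter.atTop (nhds L)

/-- `f` is an MO function: multiplicative, `∑_{n=1}^∞ f n = 0`, and for each prime `p`
the series `∑_{k=0}^∞ f (p^k)` converges to a nonzero value. -/
def IsMO (f : ℕ → ℂ) : Prop :=
  IsMultFn f ∧ SeriesTendsTo (fun n => f (n + 1)) 0 ∧
    ∀ p : ℕ, p.Prime → ∃ L : ℂ, L ≠ 0 ∧ SeriesTendsTo (fun k => f (p ^ k)) L

/-- For `k > 1`, `gk k n = 1 - k` if `k ∣ n` and `1` otherwise. -/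
noncomputable def gk (k : ℕ) (n : ℕ) : ℂ := if k ∣ n then 1 - (k : ℂ) else 1

/-!
The partial sums of `g_k` are `N % k`, hence bounded, so summation by parts makes
`∑ g_k(n) / n ^ s` converge to a holomorphic function on `0 < re s`. By the identity principle this
function is `(1 - k ^ (1 - s)) ζ(s)`, its value for `1 < re s`. For `re s ≤ 0` the terms do not tend
to zero.

The function `g_k` is multiplicative exactly when `k` cannot divide a product of coprime integers
without dividing one of them, that is, when `k` is a prime power. For `k = p ^ a` the series over
the powers of `p` is `(1 - k ^ (1 - s)) / (1 - p ^ (-s))`, while at other primes `q` it is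
`1 / (1 - q ^ (-s))`. Hence nonvanishing of all the local series means `k ^ (1 - s) ≠ 1`, and then
the sum of the series vanishes only at zeros of `ζ`. Conversely, a zero of `ζ` has `re s < 1`, where
`‖k ^ (1 - s)‖ > 1`.
-/

theorem natCast_mul_cpow_neg {k : ℕ} (hk : k ≠ 0) (s : ℂ) :
    (k : ℂ) * (k : ℂ) ^ (-s) = (k : ℂ) ^ (1 - s) := by
  rw [sub_eq_add_neg, Complex.cpow_add _ _ (Nat.cast_ne_zero.2 hk), Complex.cpow_one]

theorem natCast_cpow_ne_one {n : ℕ} (hn : 1 < n) {z : ℂ} (hz : z.re ≠ 0) : (n : ℂ) ^ z ≠ 1 := by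
  intro h
  have hnorm := congrArg norm h
  rw [Complex.norm_natCast_cpow_of_pos (by omega), norm_one, ← Real.one_rpow z.re,
    Real.rpow_left_inj n.cast_nonneg zero_le_one hz] at hnorm
  exact hn.ne' (by exact_mod_cast hnorm)

theorem norm_ofReal_cpow_sub_le {x y : ℝ} {w : ℂ} (hx : 0 < x) (hxy : x ≤ y) (hw : w.re ≤ 1) :
    ‖(y : ℂ) ^ w - (x : ℂ) ^ w‖ ≤ ‖w‖ * x ^ (w.re - 1) * (y - x) := by
  rcases eq_or_ne w 0 with rfl | hw0
  · simp
  refine norm_image_sub_le_of_norm_deriv_le_segment' (f := fun t : ℝ => (t : ℂ) ^ w)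
    (f' := fun t => w * (t : ℂ) ^ (w - 1)) (fun t ht => ?_) (fun t ht => ?_) y
    (Set.right_mem_Icc.2 hxy)
  · exact (hasDerivAt_ofReal_cpow_const (hx.trans_le ht.1).ne' hw0).hasDerivWithinAt
  · rw [norm_mul, Complex.norm_cpow_eq_rpow_re_of_pos (hx.trans_le ht.1), Complex.sub_re,
      Complex.one_re]
    gcongr ‖w‖ * ?_
    exact Real.rpow_le_rpow_of_nonpos hx ht.1 (by linarith)

theorem hasSum_pow_cpow_neg {n : ℕ} (hn : 1 < n) {s : ℂ} (hs : 0 < s.re) :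
    HasSum (fun j : ℕ => ((n ^ j : ℕ) : ℂ) ^ (-s)) (1 - (n : ℂ) ^ (-s))⁻¹ := by
  have hnorm : ‖(n : ℂ) ^ (-s)‖ < 1 := by
    rw [Complex.norm_natCast_cpow_of_pos (by omega)]
    exact Real.rpow_lt_one_of_one_lt_of_neg (by exact_mod_cast hn) (by simpa using hs)
  have hpow (j : ℕ) : ((n ^ j : ℕ) : ℂ) ^ (-s) = ((n : ℂ) ^ (-s)) ^ j := by
    rw [Nat.cast_pow, ← Complex.natCast_cpow_natCast_mul, Complex.cpow_nat_mul]
  simpa only [hpow] using hasSum_geometric_of_norm_lt_one hnorm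

theorem eventuallyEq_nhdsNE_of_isPreconnected {𝕜 E : Type*} [NontriviallyNormedField 𝕜]
    [NormedAddCommGroup E] [NormedSpace 𝕜 E] {F G : 𝕜 → E} {U : Set 𝕜} {x y : 𝕜}
    (hF : MeromorphicOn F U) (hG : MeromorphicOn G U) (hU : IsPreconnected U) (hx : x ∈ U)
    (hy : y ∈ U) (hFG : F =ᶠ[nhds x] G) : F =ᶠ[nhdsWithin y {y}ᶜ] G := by
  have hxtop : meromorphicOrderAt (F - G) x = ⊤ :=
    meromorphicOrderAt_eq_top_iff.2 (hFG.sub_eq.filter_mono nhdsWithin_le_nhds)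
  have hytop : meromorphicOrderAt (F - G) y = ⊤ := by
    by_contra hne
    exact (hF.sub hG).meromorphicOrderAt_ne_top_of_isPreconnected hU hy hx hne hxtop
  filter_upwards [meromorphicOrderAt_eq_top_iff.1 hytop] with z hz using sub_eq_zero.1 hz

theorem meromorphic_riemannZeta : Meromorphic riemannZeta := by
  intro s
  rcases eq_or_ne s 1 with rfl | hs
  · have hres : AnalyticAt ℂ (Function.update (fun s => (s - 1) * riemannZeta s) 1 1) 1 := by
      refine Complex.analyticAt_of_differentiable_on_punctured_nhds_of_continuousAt ?_
        (continuousAt_update_same.2 riemannZeta_residue_one)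
      filter_upwards [self_mem_nhdsWithin] with w hw
      have hd : DifferentiableAt ℂ (fun s => (s - 1) * riemannZeta s) w :=
        (differentiableAt_id.sub_const 1).mul (differentiableAt_riemannZeta hw)
      refine hd.congr_of_eventuallyEq ?_
      filter_upwards [isOpen_ne.mem_nhds hw] with z hz using Function.update_of_ne hz _ _
    have hpole : MeromorphicAt (fun s : ℂ => (s - 1)⁻¹) 1 :=
      (analyticAt_id.sub analyticAt_const).meromorphicAt.inv
    refine (hpole.mul hres.meromorphicAt).congr ?_
    filter_upwards [self_mem_nhdsWithin] with w hw
    rw [Pi.mul_apply, Function.update_of_ne hw]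
    exact inv_mul_cancel_left₀ (sub_ne_zero.2 hw) _
  · refine (DifferentiableOn.analyticAt (s := {1}ᶜ) (fun w hw => ?_)
      (isOpen_compl_singleton.mem_nhds hs)).meromorphicAt
    exact (differentiableAt_riemannZeta hw).differentiableWithinAt

theorem SeriesTendsTo.tendsto_zero {g : ℕ → ℂ} {L : ℂ} (h : SeriesTendsTo g L) :
    Tendsto g atTop (nhds 0) := by
  simpa [Function.comp_def, sum_range_succ] using (h.comp (tendsto_add_atTop_nat 1)).sub h

theorem seriesTendsTo_of_LSeriesHasSum {f : ℕ → ℂ} {s L : ℂ} (h : LSeriesHasSum f s L) :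
    SeriesTendsTo (fun n => f (n + 1) / ((n + 1 : ℕ) : ℂ) ^ s) L := by
  have hshift := (hasSum_nat_add_iff' 1).2 h
  simp only [range_one, sum_singleton, LSeries.term_zero, sub_zero] at hshift
  simpa only [SeriesTendsTo, LSeries.term_of_ne_zero (Nat.add_one_ne_zero _)]
    using hshift.tendsto_sum_nat

theorem re_pos_of_seriesTendsTo {f : ℕ → ℂ} {c : ℝ} {s L : ℂ} (hc : 0 < c)
    (hf : ∀ n, c ≤ ‖f (n + 1)‖)
    (h : SeriesTendsTo (fun n => f (n + 1) / ((n + 1 : ℕ) : ℂ) ^ s) L) : 0 < s.re := by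
  by_contra! hs
  have hterm : ∀ n : ℕ, c ≤ ‖f (n + 1) / ((n + 1 : ℕ) : ℂ) ^ s‖ := fun n => by
    rw [norm_div, Complex.norm_natCast_cpow_of_pos n.succ_pos, le_div_iff₀ (by positivity)]
    have hpow : ((n + 1 : ℕ) : ℝ) ^ s.re ≤ 1 :=
      Real.rpow_le_one_of_one_le_of_nonpos (by exact_mod_cast n.succ_pos) hs
    exact (mul_le_of_le_one_right hc.le hpow).trans (hf n)
  have hlim := h.tendsto_zero.norm
  rw [norm_zero] at hlim
  exact hc.not_ge (ge_of_tendsto' hlim hterm)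

section BoundedPartialSums

/-- The `n`-th term of the Dirichlet series `∑ f n / n ^ s` after summation by parts. When the
partial sums of `f` are bounded, the sum of these terms converges absolutely for `0 < re s`.
Indices are shifted by one, since the Dirichlet series starts at `n = 1`. -/
noncomputable def abelTerm (f : ℕ → ℂ) (n : ℕ) (s : ℂ) : ℂ :=
  (∑ i ∈ range (n + 1), f (i + 1)) * (((n + 1 : ℕ) : ℂ) ^ (-s) - ((n + 2 : ℕ) : ℂ) ^ (-s))

theorem sum_range_div_cpow_eq_add_sum_abelTerm (f : ℕ → ℂ) (s : ℂ) (N : ℕ) :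
    ∑ n ∈ range N, f (n + 1) / ((n + 1 : ℕ) : ℂ) ^ s =
      (∑ n ∈ range N, f (n + 1)) * ((N + 1 : ℕ) : ℂ) ^ (-s) + ∑ n ∈ range N, abelTerm f n s := by
  induction N with
  | zero => simp
  | succ N ih =>
    rw [sum_range_succ, sum_range_succ _ N, sum_range_succ _ N, ih, abelTerm, sum_range_succ _ N,
      div_eq_mul_inv, ← Complex.cpow_neg]
    ring

theorem differentiable_abelTerm (f : ℕ → ℂ) (n : ℕ) : Differentiable ℂ (abelTerm f n) := by
  have hpow (m : ℕ) : Differentiable ℂ fun s : ℂ => ((m + 1 : ℕ) : ℂ) ^ (-s) :=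
    differentiable_neg.const_cpow (Or.inl (Nat.cast_ne_zero.2 m.succ_ne_zero))
  exact ((hpow n).sub (hpow (n + 1))).const_mul _

variable {f : ℕ → ℂ} {C : ℝ}

theorem norm_abelTerm_le (hf : ∀ N, ‖∑ n ∈ range N, f (n + 1)‖ ≤ C) {s : ℂ} {σ R : ℝ}
    (hσ : 0 < σ) (hσs : σ ≤ s.re) (hR : ‖s‖ ≤ R) (n : ℕ) :
    ‖abelTerm f n s‖ ≤ C * (R * ((n + 1 : ℕ) : ℝ) ^ (-σ - 1)) := by
  have hR0 : 0 ≤ R := (norm_nonneg s).trans hR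
  have hdiff : ‖((n + 1 : ℕ) : ℂ) ^ (-s) - ((n + 2 : ℕ) : ℂ) ^ (-s)‖ ≤
      ‖s‖ * ((n + 1 : ℕ) : ℝ) ^ (-s.re - 1) := by
    have h := norm_ofReal_cpow_sub_le (x := (n + 1 : ℕ)) (y := (n + 2 : ℕ)) (w := -s)
      (by positivity) (by gcongr; norm_num) (by rw [Complex.neg_re]; linarith)
    have hstep : ((n + 2 : ℕ) : ℝ) - ((n + 1 : ℕ) : ℝ) = 1 := by push_cast; ring
    rw [norm_sub_rev]
    rwa [hstep, mul_one, norm_neg, Complex.neg_re, Complex.ofReal_natCast,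
      Complex.ofReal_natCast] at h
  have hpow : ((n + 1 : ℕ) : ℝ) ^ (-s.re - 1) ≤ ((n + 1 : ℕ) : ℝ) ^ (-σ - 1) :=
    Real.rpow_le_rpow_of_exponent_le (by exact_mod_cast n.succ_pos) (by linarith)
  rw [abelTerm, norm_mul]
  refine mul_le_mul (hf _) (hdiff.trans ?_) (norm_nonneg _) ((norm_nonneg _).trans (hf 0))
  gcongr

theorem summable_abelTerm_bound {σ : ℝ} (hσ : 0 < σ) (C R : ℝ) :
    Summable fun n : ℕ => C * (R * ((n + 1 : ℕ) : ℝ) ^ (-σ - 1)) :=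
  (((summable_nat_add_iff 1).2 (Real.summable_nat_rpow.2 (by linarith))).mul_left R).mul_left C

theorem differentiableOn_tsum_abelTerm (hf : ∀ N, ‖∑ n ∈ range N, f (n + 1)‖ ≤ C) :
    DifferentiableOn ℂ (fun s => ∑' n, abelTerm f n s) {s | 0 < s.re} := by
  intro s hs
  rw [Set.mem_ofPred_eq] at hs
  set U : Set ℂ := {w | s.re / 2 < w.re} ∩ {w | ‖w‖ < ‖s‖ + 1}
  have hU : IsOpen U :=
    (isOpen_lt continuous_const Complex.continuous_re).inter (isOpen_lt continuous_norm
      continuous_const)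
  have hsU : s ∈ U := ⟨half_lt_self hs, lt_add_one ‖s‖⟩
  have hdiff : DifferentiableOn ℂ (fun s => ∑' n, abelTerm f n s) U :=
    Complex.differentiableOn_tsum_of_summable_norm
      (summable_abelTerm_bound (half_pos hs) C (‖s‖ + 1))
      (fun n => (differentiable_abelTerm f n).differentiableOn) hU
      fun n w hw => norm_abelTerm_le hf (half_pos hs) hw.1.le hw.2.le n
  exact (hdiff.differentiableAt (hU.mem_nhds hsU)).differentiableWithinAt

theorem seriesTendsTo_tsum_abelTerm (hf : ∀ N, ‖∑ n ∈ range N, f (n + 1)‖ ≤ C) {s : ℂ}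
    (hs : 0 < s.re) :
    SeriesTendsTo (fun n => f (n + 1) / ((n + 1 : ℕ) : ℂ) ^ s) (∑' n, abelTerm f n s) := by
  have habel : Summable fun n => abelTerm f n s :=
    .of_norm_bounded (summable_abelTerm_bound hs C ‖s‖) (norm_abelTerm_le hf hs le_rfl le_rfl)
  have hbdry : Tendsto (fun N : ℕ => (∑ n ∈ range N, f (n + 1)) * ((N + 1 : ℕ) : ℂ) ^ (-s))
      atTop (nhds 0) := by
    have hpow : Tendsto (fun N : ℕ => C * ((N + 1 : ℕ) : ℝ) ^ (-s.re)) atTop (nhds 0) := by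
      simpa using ((tendsto_rpow_neg_atTop hs).comp
        (tendsto_natCast_atTop_atTop.comp (tendsto_add_atTop_nat 1))).const_mul C
    refine squeeze_zero_norm (fun N => ?_) hpow
    rw [norm_mul, Complex.norm_natCast_cpow_of_pos N.succ_pos, Complex.neg_re]
    gcongr
    exact hf N
  simpa only [SeriesTendsTo, sum_range_div_cpow_eq_add_sum_abelTerm, zero_add]
    using hbdry.add habel.hasSum.tendsto_sum_nat

theorem seriesTendsTo_of_meromorphicOn (hf : ∀ N, ‖∑ n ∈ range N, f (n + 1)‖ ≤ C)
    {G : ℂ → ℂ} (hG : MeromorphicOn G {s | 0 < s.re}) {s₀ : ℂ} (hs₀ : 0 < s₀.re)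
    (hfG : ∀ᶠ s in nhds s₀, LSeriesHasSum f s (G s)) {s : ℂ} (hs : 0 < s.re)
    (hGs : ContinuousAt G s) :
    SeriesTendsTo (fun n => f (n + 1) / ((n + 1 : ℕ) : ℂ) ^ s) (G s) := by
  have hopen : IsOpen {s : ℂ | 0 < s.re} := isOpen_lt continuous_const Complex.continuous_re
  have hsum := (differentiableOn_tsum_abelTerm hf).analyticOnNhd hopen
  have hnear : (fun s => ∑' n, abelTerm f n s) =ᶠ[nhds s₀] G := by
    filter_upwards [hfG, hopen.mem_nhds hs₀] with w hw hwre
    exact tendsto_nhds_unique (seriesTendsTo_tsum_abelTerm hf hwre)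
      (seriesTendsTo_of_LSeriesHasSum hw)
  have heq : (fun s => ∑' n, abelTerm f n s) =ᶠ[nhds s] G :=
    ((hsum s hs).continuousAt.eventuallyEq_nhds_iff_eventuallyEq_nhdsNE hGs).1
      (eventuallyEq_nhdsNE_of_isPreconnected hsum.meromorphicOn hG
        (convex_halfSpace_re_gt 0).isPreconnected hs₀ hs hnear)
  exact heq.eq_of_nhds ▸ seriesTendsTo_tsum_abelTerm hf hs

end BoundedPartialSums

section gk

variable {k : ℕ}

theorem sum_range_gk (k N : ℕ) : ∑ n ∈ range N, gk k (n + 1) = (N % k : ℕ) := by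
  have hgk (n : ℕ) : gk k n = 1 - if k ∣ n then (k : ℂ) else 0 := by
    rw [gk]
    split_ifs <;> simp
  simp only [hgk, sum_sub_distrib, sum_const, card_range, ← sum_filter, Nat.card_multiples,
    nsmul_eq_mul, mul_one]
  rw [sub_eq_iff_eq_add, mul_comm]
  exact_mod_cast (Nat.mod_add_div N k).symm

theorem norm_sum_range_gk_le (hk : 0 < k) (N : ℕ) : ‖∑ n ∈ range N, gk k (n + 1)‖ ≤ k := by
  rw [sum_range_gk, Complex.norm_natCast]
  exact_mod_cast (Nat.mod_lt N hk).le

theorem one_le_norm_gk (hk : 1 < k) (n : ℕ) : 1 ≤ ‖gk k n‖ := by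
  rw [gk]
  split_ifs
  · rw [norm_sub_rev, ← Nat.cast_pred (by omega), Complex.norm_natCast]
    exact_mod_cast Nat.le_sub_one_of_lt hk
  · simp

theorem hasSum_gk_mul {ι : Type*} {u : ι → ℕ} {σ : ι → ι} (hσ : Function.Injective σ)
    (hu : ∀ i, k ∣ u i ↔ i ∈ Set.range σ) {F : ι → ℂ} {c Z : ℂ} (hF : ∀ i, F (σ i) = c * F i)
    (hZ : HasSum F Z) : HasSum (fun i => gk k (u i) * F i) ((1 - k * c) * Z) := by
  classical
  have hdvd : HasSum ((Set.range σ).indicator F) (c * Z) := by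
    rw [← hasSum_subtype_iff_indicator]
    refine hσ.hasSum_range_iff.2 ?_
    simpa only [Function.comp_def, hF] using hZ.mul_left c
  have hterm (i : ι) : gk k (u i) * F i = F i - k * (Set.range σ).indicator F i := by
    simp only [gk, hu, Set.indicator_apply]
    split_ifs <;> ring
  have hZc : (1 - k * c) * Z = Z - k * (c * Z) := by ring
  simpa only [hterm, hZc] using hZ.sub (hdvd.mul_left (k : ℂ))

theorem LSeriesHasSum_gk (hk : k ≠ 0) {s : ℂ} (hs : 1 < s.re) :
    LSeriesHasSum (gk k) s ((1 - (k : ℂ) ^ (1 - s)) * riemannZeta s) := by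
  have hterm (n : ℕ) : LSeries.term 1 s (k * n) = (k : ℂ) ^ (-s) * LSeries.term 1 s n := by
    rcases eq_or_ne n 0 with rfl | hn
    · simp
    · simp [LSeries.term_of_ne_zero, hk, hn, Complex.natCast_mul_natCast_cpow, Complex.cpow_neg,
        mul_comm]
  have hgk (n : ℕ) : gk k n * LSeries.term 1 s n = LSeries.term (gk k) s n := by
    rcases eq_or_ne n 0 with rfl | hn
    · simp
    · simp [LSeries.term_of_ne_zero hn, div_eq_mul_inv]
  have h := hasSum_gk_mul (k := k) (u := id) (mul_right_injective₀ hk)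
    (fun n => by simp [dvd_iff_exists_eq_mul_right, eq_comm]) hterm (LSeriesHasSum_one hs)
  simpa only [LSeriesHasSum, id_eq, hgk, natCast_mul_cpow_neg hk] using h

theorem seriesTendsTo_gk_div_cpow (hk : 0 < k) {s : ℂ} (hs : 0 < s.re) (hs1 : s ≠ 1) :
    SeriesTendsTo (fun n => gk k (n + 1) / ((n + 1 : ℕ) : ℂ) ^ s)
      ((1 - (k : ℂ) ^ (1 - s)) * riemannZeta s) := by
  have hfactor : Differentiable ℂ fun s : ℂ => 1 - (k : ℂ) ^ (1 - s) :=
    ((differentiable_id.const_sub 1).const_cpow (Or.inl (Nat.cast_ne_zero.2 hk.ne'))).const_sub 1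
  refine seriesTendsTo_of_meromorphicOn (norm_sum_range_gk_le hk)
    (G := fun s => (1 - (k : ℂ) ^ (1 - s)) * riemannZeta s) (s₀ := 2)
    (fun w _ => (hfactor.analyticAt w).meromorphicAt.mul (meromorphic_riemannZeta w)) (by simp) ?_
    hs (hfactor.continuous.continuousAt.mul (differentiableAt_riemannZeta hs1).continuousAt)
  filter_upwards [(isOpen_lt continuous_const Complex.continuous_re).mem_nhds
    (show (1 : ℝ) < (2 : ℂ).re by simp)] with w hw using LSeriesHasSum_gk hk.ne' hw

theorem hasSum_gk_prime_pow {p : ℕ} (hp : p.Prime) (a : ℕ) {s : ℂ} (hs : 0 < s.re) :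
    HasSum (fun j => gk (p ^ a) (p ^ j) / ((p ^ j : ℕ) : ℂ) ^ s)
      ((1 - ((p ^ a : ℕ) : ℂ) ^ (1 - s)) * (1 - (p : ℂ) ^ (-s))⁻¹) := by
  have hterm (j : ℕ) : ((p ^ (j + a) : ℕ) : ℂ) ^ (-s) =
      ((p ^ a : ℕ) : ℂ) ^ (-s) * ((p ^ j : ℕ) : ℂ) ^ (-s) := by
    rw [← Complex.natCast_mul_natCast_cpow, ← Nat.cast_mul, ← pow_add, add_comm]
  have h := hasSum_gk_mul (k := p ^ a) (u := (p ^ ·)) (add_left_injective a)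
    (fun j => by simp [Nat.pow_dvd_pow_iff_le_right hp.one_lt, le_iff_exists_add', eq_comm])
    hterm (hasSum_pow_cpow_neg hp.one_lt hs)
  rw [natCast_mul_cpow_neg (pow_pos hp.pos a).ne'] at h
  simpa only [Complex.cpow_neg, ← div_eq_mul_inv] using h

theorem hasSum_gk_pow_of_forall_not_dvd {p : ℕ} (hp : 1 < p) (hkp : ∀ j, ¬ k ∣ p ^ j) {s : ℂ}
    (hs : 0 < s.re) :
    HasSum (fun j => gk k (p ^ j) / ((p ^ j : ℕ) : ℂ) ^ s) (1 - (p : ℂ) ^ (-s))⁻¹ := by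
  simpa only [gk, hkp, if_false, one_div, ← Complex.cpow_neg] using hasSum_pow_cpow_neg hp hs

theorem forall_prime_exists_seriesTendsTo_gk_iff (hk : IsPrimePow k) {s : ℂ} (hs : 0 < s.re) :
    (∀ p : ℕ, p.Prime →
      ∃ L : ℂ, L ≠ 0 ∧ SeriesTendsTo (fun j => gk k (p ^ j) / ((p ^ j : ℕ) : ℂ) ^ s) L) ↔
      (k : ℂ) ^ (1 - s) ≠ 1 := by
  obtain ⟨p, a, hp, ha, rfl⟩ := (isPrimePow_nat_iff k).1 hk
  have hgeom {q : ℕ} (hq : q.Prime) : (1 - (q : ℂ) ^ (-s))⁻¹ ≠ 0 :=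
    inv_ne_zero (sub_ne_zero.2 (natCast_cpow_ne_one hq.one_lt (by simpa using hs.ne')).symm)
  constructor
  · intro h heq
    obtain ⟨L, hL, hLsum⟩ := h p hp
    have hL0 := tendsto_nhds_unique hLsum (hasSum_gk_prime_pow hp a hs).tendsto_sum_nat
    rw [heq, sub_self, zero_mul] at hL0
    exact hL hL0
  · intro hne q hq
    rcases eq_or_ne q p with rfl | hqp
    · exact ⟨_, mul_ne_zero (sub_ne_zero.2 hne.symm) (hgeom hq),
        (hasSum_gk_prime_pow hq a hs).tendsto_sum_nat⟩
    · have hndvd (j : ℕ) : ¬ p ^ a ∣ q ^ j := fun hdvd =>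
        hqp ((Nat.prime_dvd_prime_iff_eq hp hq).1
          (hp.dvd_of_dvd_pow ((dvd_pow_self p ha.ne').trans hdvd))).symm
      exact ⟨_, hgeom hq, (hasSum_gk_pow_of_forall_not_dvd hq.one_lt hndvd hs).tendsto_sum_nat⟩

end gk

section Multiplicativity

theorem isMultFn_div_cpow_iff {f : ℕ → ℂ} (s : ℂ) :
    IsMultFn (fun n => f n / (n : ℂ) ^ s) ↔ IsMultFn f := by
  simp only [IsMultFn, Nat.cast_one, Complex.one_cpow, div_one]
  refine and_congr_right fun hone => forall₂_congr fun m n => forall_congr' fun hmn => ?_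
  rcases eq_or_ne m 0 with rfl | hm
  · simp [(Nat.coprime_zero_left n).1 hmn, hone]
  rcases eq_or_ne n 0 with rfl | hn
  · simp [(Nat.coprime_zero_right m).1 hmn, hone]
  have hmns : ((m : ℂ) * n) ^ s ≠ 0 := by simp [Complex.cpow_eq_zero_iff, hm, hn]
  rw [Nat.cast_mul, div_mul_div_comm, ← Complex.natCast_mul_natCast_cpow, div_left_inj' hmns]

theorem isPrimePow_iff_forall_coprime {k : ℕ} (hk : 1 < k) :
    IsPrimePow k ↔ ∀ m n : ℕ, m.Coprime n → k ∣ m * n → k ∣ m ∨ k ∣ n := by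
  refine ⟨fun h m n hmn => (hmn.isPrimePow_dvd_mul h).1, fun h => ?_⟩
  have hp : k.minFac.Prime := Nat.minFac_prime hk.ne'
  have hcop : (ordProj[k.minFac] k).Coprime (ordCompl[k.minFac] k) :=
    (Nat.coprime_ordCompl hp (by omega)).pow_left _
  rcases h _ _ hcop (Nat.ordProj_mul_ordCompl_eq_self k _).symm.dvd with hproj | hcompl
  · obtain ⟨a, -, ha⟩ := (Nat.dvd_prime_pow hp).1 hproj
    refine (isPrimePow_nat_iff k).2 ⟨k.minFac, a, hp, Nat.pos_of_ne_zero ?_, ha.symm⟩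
    rintro rfl
    exact hk.ne' (by simpa using ha)
  · exact absurd ((Nat.minFac_dvd k).trans hcompl) (Nat.not_dvd_ordCompl hp (by omega))

theorem gk_mul_iff {k m n : ℕ} (hk : 1 < k) (hmn : m.Coprime n) :
    gk k (m * n) = gk k m * gk k n ↔ (k ∣ m * n → k ∣ m ∨ k ∣ n) := by
  have hboth : ¬ (k ∣ m ∧ k ∣ n) := fun h => hk.ne' (Nat.eq_one_of_dvd_coprimes hmn h.1 h.2)
  have hk0 : (k : ℂ) ≠ 0 := by exact_mod_cast (by omega : k ≠ 0)
  by_cases hm : k ∣ m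
  · have hn : ¬ k ∣ n := fun hn => hboth ⟨hm, hn⟩
    simp [gk, hm, hn, hm.mul_right n]
  by_cases hn : k ∣ n
  · simp [gk, hm, hn, hn.mul_left m]
  by_cases hprod : k ∣ m * n <;> simp [gk, hm, hn, hprod, hk0]

theorem isMultFn_gk_iff {k : ℕ} (hk : 1 < k) : IsMultFn (gk k) ↔ IsPrimePow k := by
  have hone : gk k 1 = 1 := if_neg (by simpa using hk.ne')
  rw [isPrimePow_iff_forall_coprime hk, IsMultFn, and_iff_right hone]
  exact forall₂_congr fun m n => forall_congr' fun hmn => gk_mul_iff hk hmn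

end Multiplicativity

theorem stmt18 (k : ℕ) (hk : 1 < k) (α : ℂ) :
    IsMO (fun n => gk k n / (n : ℂ) ^ α) ↔
      (IsPrimePow k ∧ 0 < α.re ∧ riemannZeta α = 0) := by
  have hgk1 : ∀ n, 1 ≤ ‖gk k (n + 1)‖ := fun n => one_le_norm_gk hk _
  constructor
  · rintro ⟨hmult, hsum, hlocal⟩
    have hpp : IsPrimePow k := (isMultFn_gk_iff hk).1 ((isMultFn_div_cpow_iff α).1 hmult)
    have hre : 0 < α.re := re_pos_of_seriesTendsTo one_pos hgk1 hsum
    have hfactor : (k : ℂ) ^ (1 - α) ≠ 1 :=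
      (forall_prime_exists_seriesTendsTo_gk_iff hpp hre).1 hlocal
    have hα : α ≠ 1 := by
      rintro rfl
      simp at hfactor
    have hzero := tendsto_nhds_unique hsum (seriesTendsTo_gk_div_cpow (by omega) hre hα)
    exact ⟨hpp, hre, (mul_eq_zero.1 hzero.symm).resolve_left (sub_ne_zero.2 hfactor.symm)⟩
  · rintro ⟨hpp, hre, hzeta⟩
    have hlt : α.re < 1 := by
      by_contra! hge
      exact riemannZeta_ne_zero_of_one_le_re hge hzeta
    have hα : α ≠ 1 := by
      rintro rfl
      simp at hlt
    have hfactor : (k : ℂ) ^ (1 - α) ≠ 1 := natCast_cpow_ne_one hk (sub_pos.2 hlt).ne'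
    refine ⟨(isMultFn_div_cpow_iff α).2 ((isMultFn_gk_iff hk).2 hpp), ?_,
      (forall_prime_exists_seriesTendsTo_gk_iff hpp hre).2 hfactor⟩
    simpa only [hzeta, mul_zero] using seriesTendsTo_gk_div_cpow (by omega) hre hα
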